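/- Let g : ℕ → ℂ satisfy Σ_{n≥0} g(n)q^n = (∏_{k≥0}(1 − q^{10k+2})(1 − q^{10k+8})) · (∏_{k≥0}(1 − q^{10k+4})(1 − q^{10k+6}))² · (∏_{k≥0}(1 − q^{5k+2})(1 − q^{5k+3}))^{−2} for all complex q with |q| < 1. Then g(n) is real for all n, and there exists N₀ such that for all n ≥ N₀: g(n) > 0 whenever n ≡ 0, 2 or 3 (mod 5), and g(n) < 0 whenever n ≡ 4 (mod 5). -/

import Mathlib

open Complex

namespace Tang

/-- The product `∏ (1 + c q^(m k + j))`. -/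
noncomputable def ph (q c : ℂ) (m j : ℕ) : ℂ := ∏' k : ℕ, (1 + c * q ^ (m * k + j))

lemma ph_summable {q c : ℂ} (hq : ‖q‖ < 1) {m : ℕ} (hm : 0 < m) (j : ℕ) :
    Summable (fun k : ℕ => ‖c * q ^ (m * k + j)‖) := by
  have h1 : ‖q ^ m‖ < 1 := by
    rw [norm_pow]; exact pow_lt_one₀ (norm_nonneg _) hq hm.ne'
  have := (summable_geometric_of_lt_one (norm_nonneg _) h1).mul_left (‖c‖ * ‖q ^ j‖)
  refine this.congr fun k => ?_
  rw [← norm_pow, ← norm_mul, ← norm_mul]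
  congr 1
  ring

lemma ph_mult {q c : ℂ} (hq : ‖q‖ < 1) {m : ℕ} (hm : 0 < m) (j : ℕ) :
    Multipliable (fun k : ℕ => 1 + c * q ^ (m * k + j)) :=
  multipliable_one_add_of_summable (ph_summable hq hm j)

lemma one_add_ne {q c : ℂ} (hq : ‖q‖ < 1) (hc : ‖c‖ ≤ 1) {n : ℕ} (hn : 0 < n) :
    1 + c * q ^ n ≠ 0 := by
  intro h
  have h1 : c * q ^ n = -1 := by linear_combination h
  have h2 : ‖c * q ^ n‖ = 1 := by rw [h1]; simp
  rw [norm_mul, norm_pow] at h2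
  have h3 : ‖q‖ ^ n < 1 := pow_lt_one₀ (norm_nonneg _) hq hn.ne'
  have h4 : 0 ≤ ‖q‖ ^ n := by positivity
  nlinarith [norm_nonneg c]

lemma ph_ne {q c : ℂ} (hq : ‖q‖ < 1) (hc : ‖c‖ ≤ 1) {m j : ℕ} (hm : 0 < m) (hj : 0 < j) :
    ph q c m j ≠ 0 :=
  tprod_one_add_ne_zero_of_summable (fun _ => one_add_ne hq hc (by omega)) (ph_summable hq hm j)

lemma prod_range_mul' (F : ℕ → ℂ) (r N : ℕ) :
    ∏ k ∈ Finset.range (r * N), F k = ∏ i ∈ Finset.range r, ∏ k ∈ Finset.range N, F (r * k + i) := by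
  induction N with
  | zero => simp
  | succ n ih =>
    rw [Nat.mul_succ, Finset.prod_range_add, ih, ← Finset.prod_mul_distrib]
    refine Finset.prod_congr rfl fun i _ => ?_
    rw [Finset.prod_range_succ]

lemma ph_split {q c : ℂ} (hq : ‖q‖ < 1) {m : ℕ} (hm : 0 < m) (j : ℕ) {r : ℕ} (hr : 0 < r) :
    ph q c m j = ∏ i ∈ Finset.range r, ph q c (r * m) (m * i + j) := by
  have h1 := (ph_mult (c := c) hq hm j).tendsto_prod_tprod_nat
  have h2 : Filter.Tendsto (fun N : ℕ => r * N) Filter.atTop Filter.atTop :=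
    Filter.tendsto_id.const_mul_atTop' hr
  have h3 := h1.comp h2
  have h4 : Filter.Tendsto (fun N : ℕ => ∏ i ∈ Finset.range r, ∏ k ∈ Finset.range N,
      (1 + c * q ^ (r * m * k + (m * i + j)))) Filter.atTop
      (nhds (∏ i ∈ Finset.range r, ph q c (r * m) (m * i + j))) :=
    tendsto_finsetProd _ fun i _ =>
      (ph_mult hq (Nat.mul_pos hr hm) (m * i + j)).tendsto_prod_tprod_nat
  refine tendsto_nhds_unique h3 (h4.congr fun N => ?_)
  simp only [Function.comp]
  rw [prod_range_mul']
  refine Finset.prod_congr rfl fun i _ => Finset.prod_congr rfl fun k _ => ?_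
  congr 3
  ring

lemma ph_scale (q c : ℂ) (m j s : ℕ) : ph (q ^ s) c m j = ph q c (s * m) (s * j) := by
  unfold ph
  refine tprod_congr fun k => ?_
  rw [← pow_mul]; congr 3; ring

lemma ph_dbl {q : ℂ} (hq : ‖q‖ < 1) {m : ℕ} (hm : 0 < m) (j : ℕ) :
    ph q (-1) (2 * m) (2 * j) = ph q (-1) m j * ph q 1 m j := by
  unfold ph
  rw [← (ph_mult hq hm j).tprod_mul (ph_mult hq hm j)]
  refine tprod_congr fun k => ?_
  rw [show 2 * m * k + 2 * j = (m * k + j) * 2 by ring, pow_mul]; ring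

lemma ph_pair {q c : ℂ} (hq : ‖q‖ < 1) {m : ℕ} (hm : 0 < m) (i j : ℕ) :
    ∏' k : ℕ, (1 + c * q ^ (m * k + i)) * (1 + c * q ^ (m * k + j)) = ph q c m i * ph q c m j := by
  unfold ph
  rw [← (ph_mult hq hm i).tprod_mul (ph_mult hq hm j)]

lemma ph_zero {q c : ℂ} (hq : ‖q‖ < 1) {m : ℕ} (hm : 0 < m) :
    ph q c m 0 = (1 + c) * ph q c m m := by
  unfold ph
  have := ph_mult (c := c) hq hm m
  rw [tprod_eq_zero_mul' (f := fun k : ℕ => 1 + c * q ^ (m * k + 0))]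
  · simp [Nat.mul_succ]
  · simpa [Nat.mul_succ] using this

/-! ### finite q-binomial theorem -/

/-- Gaussian binomials. -/
noncomputable def gb (p : ℂ) : ℕ → ℕ → ℂ
  | _, 0 => 1
  | 0, _ + 1 => 0
  | M + 1, j + 1 => gb p M (j + 1) + p ^ (M - j) * gb p M j

lemma gb_zero (p : ℂ) (M : ℕ) : gb p M 0 = 1 := by cases M <;> simp [gb]

lemma gb_gt (p : ℂ) : ∀ (M j : ℕ), M < j → gb p M j = 0
  | 0, 0, h => by omega
  | 0, j + 1, _ => by simp [gb]
  | M + 1, 0, h => by omega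
  | M + 1, j + 1, h => by
    rw [gb, gb_gt p M (j + 1) (by omega), gb_gt p M j (by omega)]; simp

/-- q-factorial. -/
noncomputable def qf (p : ℂ) (m : ℕ) : ℂ := ∏ i ∈ Finset.range m, (1 - p ^ (i + 1))

lemma qf_succ (p : ℂ) (m : ℕ) : qf p (m + 1) = qf p m * (1 - p ^ (m + 1)) := by
  simp [qf, Finset.prod_range_succ]

lemma gb_mul (p : ℂ) : ∀ (j d : ℕ), gb p (j + d) j * (qf p j * qf p d) = qf p (j + d) := by
  suffices ∀ M j d : ℕ, j + d = M → gb p M j * (qf p j * qf p d) = qf p M by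
    intro j d; exact this _ j d rfl
  intro M
  induction M with
  | zero =>
    intro j d h
    obtain ⟨rfl, rfl⟩ : j = 0 ∧ d = 0 := by omega
    simp [gb_zero, qf]
  | succ M ih =>
    intro j d h
    cases j with
    | zero =>
      obtain rfl : d = M + 1 := by omega
      simp [gb_zero, qf]
    | succ j =>
      rw [gb]
      have e2 := ih j d (by omega)
      cases d with
      | zero =>
        obtain rfl : j = M := by omega
        rw [gb_gt p j (j+1) (by omega), qf_succ]
        simp only [Nat.sub_self, pow_zero]
        linear_combination (1 - p ^ (j + 1)) * e2
      | succ d =>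
        have e1 := ih (j + 1) d (by omega)
        have e3 : M - j = d + 1 := by omega
        have e4 : M + 1 = (d + 1) + (j + 1) := by omega
        rw [e3, qf_succ p M, e4]
        rw [qf_succ p j] at e1 ⊢
        rw [qf_succ p d] at e2 ⊢
        rw [pow_add p (d + 1) (j + 1)]
        linear_combination (1 - p ^ (d + 1)) * e1 + p ^ (d + 1) * (1 - p ^ (j + 1)) * e2

lemma qbinom (p y : ℂ) (M : ℕ) : ∏ k ∈ Finset.range M, (1 + y * p ^ k) =
    ∑ j ∈ Finset.range (M + 1), gb p M j * p ^ (j * (j - 1) / 2) * y ^ j := by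
  induction M with
  | zero => simp [gb_zero]
  | succ M ih =>
    rw [Finset.prod_range_succ, ih, Finset.sum_range_succ' _ (M + 1)]
    have h1 : ∀ j ∈ Finset.range (M + 1),
        gb p (M + 1) (j + 1) * p ^ ((j + 1) * (j + 1 - 1) / 2) * y ^ (j + 1) =
        gb p M (j + 1) * p ^ ((j + 1) * (j + 1 - 1) / 2) * y ^ (j + 1) +
        y * p ^ M * (gb p M j * p ^ (j * (j - 1) / 2) * y ^ j) := by
      intro j hj
      have hj' : j ≤ M := by simpa [Nat.lt_succ_iff] using hj
      rw [gb]
      have h2 : (j + 1) * (j + 1 - 1) / 2 = j * (j - 1) / 2 + j := by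
        cases j with
        | zero => simp
        | succ i =>
          simp only [Nat.add_sub_cancel]
          rw [show (i + 1 + 1) * (i + 1) = (i + 1) * i + (i + 1) * 2 by ring]
          omega
      have h3 : p ^ M = p ^ (M - j) * p ^ j := by rw [← pow_add]; congr 1; omega
      rw [h2, h3, pow_add, pow_succ]
      ring
    rw [Finset.sum_congr rfl h1, Finset.sum_add_distrib, ← Finset.mul_sum]
    have h4 := Finset.sum_range_succ' (fun j => gb p M j * p ^ (j * (j - 1) / 2) * y ^ j) (M + 1)
    rw [Finset.sum_range_succ, gb_gt p M (M + 1) (by omega)] at h4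
    simp only [gb_zero] at h4 ⊢
    linear_combination h4

lemma prod_odd_zpow (w : ℂ) (x : ℂ) (N : ℕ) (hw : w ≠ 0) :
    ∏ k ∈ Finset.range N, (x * w ^ (-(2 * (k : ℤ) + 1))) = x ^ N * w ^ (-(N : ℤ) ^ 2) := by
  induction N with
  | zero => simp
  | succ n ih =>
    rw [Finset.prod_range_succ, ih]
    push_cast
    rw [show -((n : ℤ) + 1) ^ 2 = -(n : ℤ) ^ 2 + -(2 * (n : ℤ) + 1) by ring, zpow_add₀ hw]
    ring

lemma fin_jtp {w x : ℂ} (hw : w ≠ 0) (hx : x ≠ 0) (N : ℕ) :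
    (∏ k ∈ Finset.range N, (1 + x * w ^ (2 * k + 1))) *
      (∏ k ∈ Finset.range N, (1 + x⁻¹ * w ^ (2 * k + 1))) =
    ∑ j ∈ Finset.range (2 * N + 1), gb (w ^ 2) (2 * N) j *
      (w ^ (((j : ℤ) - N) ^ 2) * x ^ ((j : ℤ) - N)) := by
  have hb := qbinom (w ^ 2) (x * w ^ (1 - 2 * (N : ℤ))) (2 * N)
  have h1 : ∀ j ∈ Finset.range (2 * N + 1), gb (w ^ 2) (2 * N) j * (w ^ 2) ^ (j * (j - 1) / 2) *
      (x * w ^ (1 - 2 * (N : ℤ))) ^ j = (x ^ N * w ^ (-(N : ℤ) ^ 2)) *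
      (gb (w ^ 2) (2 * N) j * (w ^ (((j : ℤ) - N) ^ 2) * x ^ ((j : ℤ) - N))) := by
    intro j _
    rw [← pow_mul, Nat.mul_div_cancel' (Nat.even_mul_pred_self j).two_dvd]
    have e1 : w ^ (j * (j - 1)) = w ^ ((j : ℤ) * (j - 1)) := by
      rw [← zpow_natCast]; congr 1
      cases j <;> simp
    have e2 : (x * w ^ (1 - 2 * (N : ℤ))) ^ j = x ^ j * w ^ ((1 - 2 * (N : ℤ)) * j) := by
      rw [mul_pow, zpow_mul, zpow_natCast]
    have e3 : x ^ ((j : ℤ) - N) = x ^ j / x ^ N := by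
      rw [zpow_sub₀ hx, zpow_natCast, zpow_natCast]
    have e4 : w ^ ((j : ℤ) * (j - 1)) * w ^ ((1 - 2 * (N : ℤ)) * j) =
        w ^ (-(N : ℤ) ^ 2) * w ^ (((j : ℤ) - N) ^ 2) := by
      rw [← zpow_add₀ hw, ← zpow_add₀ hw]; congr 1; ring
    have hxN : x ^ N ≠ 0 := pow_ne_zero _ hx
    rw [e1, e2, e3]
    calc _ = gb (w ^ 2) (2 * N) j * x ^ j *
          (w ^ ((j : ℤ) * (j - 1)) * w ^ ((1 - 2 * (N : ℤ)) * j)) := by ring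
      _ = _ := by rw [e4]; field_simp
  rw [Finset.sum_congr rfl h1, ← Finset.mul_sum] at hb
  have hne : x ^ N * w ^ (-(N : ℤ) ^ 2) ≠ 0 := mul_ne_zero (pow_ne_zero _ hx) (zpow_ne_zero _ hw)
  refine mul_left_cancel₀ hne ?_
  rw [← hb, two_mul, Finset.prod_range_add,
    ← Finset.prod_range_reflect (fun k => 1 + x * w ^ (1 - 2 * (N : ℤ)) * (w ^ 2) ^ k)]
  have h2 : ∀ k ∈ Finset.range N, 1 + x * w ^ (1 - 2 * (N : ℤ)) * (w ^ 2) ^ (N - 1 - k) =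
      (x * w ^ (-(2 * (k : ℤ) + 1))) * (1 + x⁻¹ * w ^ (2 * k + 1)) := by
    intro k hk
    have hk' : k < N := by simpa using hk
    have e1 : (w ^ 2) ^ (N - 1 - k) = w ^ (2 * ((N : ℤ) - 1 - k)) := by
      rw [← pow_mul, ← zpow_natCast]; congr 1; push_cast
      rw [Nat.cast_sub (by omega), Nat.cast_sub (by omega)]; simp
    have e2 : w ^ (1 - 2 * (N : ℤ)) * w ^ (2 * ((N : ℤ) - 1 - k)) = w ^ (-(2 * (k : ℤ) + 1)) := by
      rw [← zpow_add₀ hw]; congr 1; ring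
    have e3 : w ^ (-(2 * (k : ℤ) + 1)) * w ^ (2 * k + 1) = 1 := by
      rw [← zpow_natCast, ← zpow_add₀ hw]; simp
    rw [e1, mul_assoc, e2]
    have : x * x⁻¹ = 1 := mul_inv_cancel₀ hx
    linear_combination (-1 : ℂ) * e3 * (x * x⁻¹) - this
  have h3 : ∀ k ∈ Finset.range N, 1 + x * w ^ (1 - 2 * (N : ℤ)) * (w ^ 2) ^ (N + k) =
      1 + x * w ^ (2 * k + 1) := by
    intro k _
    have e1 : (w ^ 2) ^ (N + k) = w ^ (2 * ((N : ℤ) + k)) := by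
      rw [← pow_mul, ← zpow_natCast]; congr 1
    have e2 : w ^ (2 * k + 1) = w ^ (2 * (k : ℤ) + 1) := by
      rw [← zpow_natCast]; congr 1
    rw [e1, mul_assoc, ← zpow_add₀ hw, e2]; congr 3; ring
  rw [Finset.prod_congr rfl h2, Finset.prod_congr rfl h3, Finset.prod_mul_distrib,
    prod_odd_zpow w x N hw]
  ring

lemma qf_tendsto {w : ℂ} (hq : ‖w‖ < 1) :
    Filter.Tendsto (qf (w ^ 2)) Filter.atTop (nhds (ph w (-1) 2 2)) := by
  have := (ph_mult (c := -1) hq (m := 2) (by norm_num) 2).tendsto_prod_tprod_nat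
  refine this.congr fun n => ?_
  refine Finset.prod_congr rfl fun i _ => ?_
  rw [← pow_mul]; ring

lemma qf_ne {w : ℂ} (hq : ‖w‖ < 1) (m : ℕ) : qf (w ^ 2) m ≠ 0 := by
  refine Finset.prod_ne_zero_iff.2 fun i _ => ?_
  have := one_add_ne (c := -1) hq (by simp) (n := 2 * (i + 1)) (by omega)
  rw [← pow_mul]
  intro h; apply this; linear_combination h

lemma gb_bound {w : ℂ} (hq : ‖w‖ < 1) : ∃ C : ℝ, 0 ≤ C ∧ ∀ M j, ‖gb (w ^ 2) M j‖ ≤ C := by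
  have h1 := qf_tendsto hq
  have hL : ph w (-1) 2 2 ≠ 0 := ph_ne hq (by simp) (by norm_num) (by norm_num)
  obtain ⟨A, hA⟩ := h1.norm.bddAbove_range
  obtain ⟨B, hB⟩ := (h1.inv₀ hL).norm.bddAbove_range
  have hA' : ∀ m, ‖qf (w ^ 2) m‖ ≤ A := fun m => hA ⟨m, rfl⟩
  have hB' : ∀ m, ‖(qf (w ^ 2) m)⁻¹‖ ≤ B := fun m => hB ⟨m, rfl⟩
  have hA0 : 0 ≤ A := (norm_nonneg _).trans (hA' 0)
  have hB0 : 0 ≤ B := (norm_nonneg _).trans (hB' 0)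
  refine ⟨A * (B * B), by positivity, fun M j => ?_⟩
  rcases le_or_gt j M with h | h
  · obtain ⟨d, rfl⟩ := Nat.exists_eq_add_of_le h
    have e := gb_mul (w ^ 2) j d
    have e' : gb (w ^ 2) (j + d) j =
        qf (w ^ 2) (j + d) * ((qf (w ^ 2) j)⁻¹ * (qf (w ^ 2) d)⁻¹) := by
      rw [← e]; field_simp [qf_ne hq j, qf_ne hq d]
    rw [e', norm_mul, norm_mul]
    have := hA' (j + d); have := hB' j; have := hB' d
    gcongr
  · rw [gb_gt _ _ _ h]; simp; positivity

/-- Jacobi triple product. -/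
lemma jtp {w x : ℂ} (hw : w ≠ 0) (hw1 : ‖w‖ < 1) (hx : x ≠ 0)
    (hs : Summable (fun n : ℤ => ‖w ^ (n ^ 2) * x ^ n‖)) :
    ∑' n : ℤ, w ^ (n ^ 2) * x ^ n = ph w (-1) 2 2 * (ph w x 2 1 * ph w x⁻¹ 2 1) := by
  have hL : ph w (-1) 2 2 ≠ 0 := ph_ne hw1 (by simp) (by norm_num) (by norm_num)
  set F : ℕ → ℤ → ℂ := fun N n =>
    (if -(N : ℤ) ≤ n then gb (w ^ 2) (2 * N) (n + N).toNat else 0) * (w ^ (n ^ 2) * x ^ n) with hF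
  have hsum : ∀ N, ∑' n, F N n = (∏ k ∈ Finset.range N, (1 + x * w ^ (2 * k + 1))) *
      (∏ k ∈ Finset.range N, (1 + x⁻¹ * w ^ (2 * k + 1))) := by
    intro N
    have hinj : Function.Injective (fun j : ℕ => (j : ℤ) - N) := by
      intro a b h; simpa using h
    rw [fin_jtp hw hx, tsum_eq_sum (s := (Finset.range (2 * N + 1)).map ⟨_, hinj⟩)]
    · rw [Finset.sum_map]
      refine Finset.sum_congr rfl fun j _ => ?_
      simp [hF]
    · intro n hn
      simp only [hF]
      split_ifs with h
      · rw [gb_gt, zero_mul]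
        by_contra hc
        apply hn
        simp only [Finset.mem_map, Finset.mem_range, Function.Embedding.coeFn_mk]
        exact ⟨(n + N).toNat, by omega, by omega⟩
      · simp
  obtain ⟨C, hC0, hC⟩ := gb_bound hw1
  have hlim : Filter.Tendsto (fun N => ∑' n, F N n) Filter.atTop
      (nhds (∑' n : ℤ, (ph w (-1) 2 2)⁻¹ * (w ^ (n ^ 2) * x ^ n))) := by
    refine tendsto_tsum_of_dominated_convergence (hs.mul_left C) ?_ ?_
    · intro n
      refine Filter.Tendsto.mul_const _ ?_
      have t1 : Filter.Tendsto (fun N : ℕ => 2 * N) Filter.atTop Filter.atTop :=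
        Filter.tendsto_id.const_mul_atTop' (by norm_num)
      have t2 : ∀ c : ℤ, Filter.Tendsto (fun N : ℕ => (c + N).toNat) Filter.atTop Filter.atTop := by
        intro c
        refine Filter.tendsto_atTop.2 fun b => ?_
        filter_upwards [Filter.eventually_ge_atTop (b + c.natAbs)] with N hN
        omega
      have t3 := ((qf_tendsto hw1).comp t1).mul
        ((((qf_tendsto hw1).comp (t2 n)).inv₀ hL).mul (((qf_tendsto hw1).comp (t2 (-n))).inv₀ hL))
      have e : ph w (-1) 2 2 * ((ph w (-1) 2 2)⁻¹ * (ph w (-1) 2 2)⁻¹) = (ph w (-1) 2 2)⁻¹ := by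
        field_simp
      rw [e] at t3
      refine t3.congr' ?_
      filter_upwards [Filter.eventually_ge_atTop n.natAbs] with N hN
      rw [if_pos (by omega)]
      have e1 := gb_mul (w ^ 2) (n + N).toNat (-n + N).toNat
      rw [show (n + N).toNat + (-n + N).toNat = 2 * N by omega] at e1
      simp only [Function.comp]
      rw [← e1]
      have := qf_ne hw1 (n + N).toNat
      have := qf_ne hw1 (-n + N).toNat
      field_simp
    · refine Filter.Eventually.of_forall fun N n => ?_
      simp only [hF]
      rw [norm_mul]
      gcongr
      split_ifs
      · exact hC _ _
      · simpa using hC0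
  have h1 := (ph_mult (c := x) hw1 (m := 2) (by norm_num) 1).tendsto_prod_tprod_nat
  have h2 := (ph_mult (c := x⁻¹) hw1 (m := 2) (by norm_num) 1).tendsto_prod_tprod_nat
  have h3 := tendsto_nhds_unique (hlim.congr hsum) (h1.mul h2)
  rw [tsum_mul_left] at h3
  unfold ph at h3 ⊢
  rw [← h3]
  unfold ph at hL
  rw [mul_inv_cancel_left₀ hL]

/-- Theta series. -/
noncomputable def th (q e : ℂ) (a : ℕ) (b : ℤ) : ℂ := ∑' n : ℤ, e ^ n * q ^ ((a : ℤ) * n ^ 2 + b * n)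

lemma summable_abs {r : ℝ} (h0 : 0 < r) (h1 : r < 1) : Summable (fun n : ℤ => r ^ (n.natAbs)) := by
  apply Summable.of_nat_of_neg
  · simpa using summable_geometric_of_lt_one h0.le h1
  · simpa using summable_geometric_of_lt_one h0.le h1

lemma th_summable {q e : ℂ} (hq : q ≠ 0) (hq1 : ‖q‖ < 1) (he : ‖e‖ = 1) {a : ℕ} (ha : 0 < a)
    (b : ℤ) : Summable (fun n : ℤ => ‖e ^ n * q ^ ((a : ℤ) * n ^ 2 + b * n)‖) := by
  have hr : 0 < ‖q‖ := norm_pos_iff.2 hq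
  refine Summable.of_nonneg_of_le (fun _ => norm_nonneg _) ?_
    ((summable_abs hr hq1).mul_left (‖q‖ ^ (-(|b| + 1) ^ 2)))
  intro n
  rw [norm_mul, norm_zpow, norm_zpow, he, one_zpow, one_mul, ← zpow_natCast ‖q‖ n.natAbs,
    ← zpow_add₀ hr.ne']
  refine zpow_le_zpow_right_of_le_one₀ hr hq1.le ?_
  rw [Int.natCast_natAbs]
  have h1 : (1 : ℤ) ≤ a := by exact_mod_cast ha
  have h2 : -(|b| * |n|) ≤ b * n := by rw [← abs_mul]; exact neg_abs_le _
  have h3 : n ^ 2 = |n| ^ 2 := (sq_abs n).symm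
  nlinarith [abs_nonneg n, abs_nonneg b, sq_nonneg (|n| - (|b| + 1)), sq_nonneg n,
    mul_nonneg (sub_nonneg.2 h1) (sq_nonneg n), sq_nonneg (|n|)]

lemma th_jtp {q e : ℂ} (hq : q ≠ 0) (hq1 : ‖q‖ < 1) (he : e = 1 ∨ e = -1) {a b : ℕ} (ha : 0 < a)
    (hb : b ≤ a) : th q e a b =
      ph q (-1) (2 * a) (2 * a) * (ph q e (2 * a) (a + b) * ph q e (2 * a) (a - b)) := by
  have he0 : e ≠ 0 := by rcases he with rfl | rfl <;> simp
  have hei : e⁻¹ = e := by rcases he with rfl | rfl <;> norm_num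
  have hen : ‖e‖ = 1 := by rcases he with rfl | rfl <;> simp
  have hterm : ∀ n : ℤ, (q ^ a) ^ (n ^ 2) * (e * q ^ b) ^ n =
      e ^ n * q ^ ((a : ℤ) * n ^ 2 + b * n) := by
    intro n
    rw [mul_zpow, ← zpow_natCast q a, ← zpow_natCast q b, ← zpow_mul, ← zpow_mul, zpow_add₀ hq]
    ring
  have hw1 : ‖q ^ a‖ < 1 := by rw [norm_pow]; exact pow_lt_one₀ (norm_nonneg _) hq1 ha.ne'
  have := jtp (w := q ^ a) (x := e * q ^ b) (pow_ne_zero _ hq) hw1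
    (mul_ne_zero he0 (pow_ne_zero _ hq))
    ((th_summable hq hq1 hen ha b).congr fun n => by rw [hterm])
  unfold th
  rw [← tsum_congr hterm, this, ph_scale]
  congr 1
  · congr 1 <;> ring
  congr 1
  · unfold ph
    refine tprod_congr fun k => ?_
    rw [mul_assoc, ← pow_mul, ← pow_add]; congr 3; ring
  · unfold ph
    refine tprod_congr fun k => ?_
    rw [mul_inv, hei, mul_assoc, ← pow_mul]; congr 2
    rw [inv_mul_eq_iff_eq_mul₀ (pow_ne_zero _ hq), ← pow_add]; congr 1
    have : a * (2 * k + 1) = 2 * a * k + a := by ring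
    omega

lemma th_neg {q e : ℂ} (he : e = 1 ∨ e = -1) (a : ℕ) (b : ℤ) : th q e a (-b) = th q e a b := by
  have hei : e⁻¹ = e := by rcases he with rfl | rfl <;> norm_num
  unfold th
  rw [← (Equiv.neg ℤ).tsum_eq]
  refine tsum_congr fun n => ?_
  simp only [Equiv.neg_apply]
  rw [zpow_neg, ← inv_zpow, hei]; congr 2; ring

lemma th_shift {q e : ℂ} (hq : q ≠ 0) (he : e = 1 ∨ e = -1) (a : ℕ) (b : ℤ) :
    th q e a b = e * q ^ ((a : ℤ) - b) * th q e a (b - 2 * a) := by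
  have he0 : e ≠ 0 := by rcases he with rfl | rfl <;> simp
  have hei : e⁻¹ = e := by rcases he with rfl | rfl <;> norm_num
  unfold th
  rw [← (Equiv.subRight (1 : ℤ)).tsum_eq, ← tsum_mul_left]
  refine tsum_congr fun n => ?_
  simp only [Equiv.subRight_apply]
  rw [zpow_sub₀ he0, zpow_one, div_eq_mul_inv, hei]
  rw [show (a : ℤ) * (n - 1) ^ 2 + b * (n - 1) = (a - b) + (a * n ^ 2 + (b - 2 * a) * n) by ring,
    zpow_add₀ hq]
  ring

lemma tsum_fin_split {r : ℕ} (φ : Fin r × (ℤ × ℤ) → ℤ × ℤ) (hφ : Function.Bijective φ)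
    {F : ℤ × ℤ → ℂ} (hF : Summable F) :
    ∑' z, F z = ∑ k : Fin r, ∑' p : ℤ × ℤ, F (φ (k, p)) := by
  rw [← (Equiv.ofBijective φ hφ).tsum_eq]
  have hs : Summable (fun c => F (Equiv.ofBijective φ hφ c)) :=
    (Equiv.ofBijective φ hφ).summable_iff.2 hF
  rw [hs.tsum_prod, tsum_fintype]
  rfl

lemma th_mul {q e e' : ℂ} (hq : q ≠ 0) (hq1 : ‖q‖ < 1) (he : ‖e‖ = 1) (he' : ‖e'‖ = 1)
    {a a' : ℕ} (ha : 0 < a) (ha' : 0 < a') (b b' : ℤ) :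
    th q e a b * th q e' a' b' = ∑' z : ℤ × ℤ, (e ^ z.1 * q ^ ((a : ℤ) * z.1 ^ 2 + b * z.1)) *
      (e' ^ z.2 * q ^ ((a' : ℤ) * z.2 ^ 2 + b' * z.2)) :=
  tsum_mul_tsum_of_summable_norm (th_summable hq hq1 he ha b) (th_summable hq hq1 he' ha' b')

lemma th_mul_summable {q e e' : ℂ} (hq : q ≠ 0) (hq1 : ‖q‖ < 1) (he : ‖e‖ = 1) (he' : ‖e'‖ = 1)
    {a a' : ℕ} (ha : 0 < a) (ha' : 0 < a') (b b' : ℤ) :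
    Summable (fun z : ℤ × ℤ => (e ^ z.1 * q ^ ((a : ℤ) * z.1 ^ 2 + b * z.1)) *
      (e' ^ z.2 * q ^ ((a' : ℤ) * z.2 ^ 2 + b' * z.2))) :=
  summable_mul_of_summable_norm (f := fun n : ℤ => e ^ n * q ^ ((a : ℤ) * n ^ 2 + b * n))
    (g := fun n : ℤ => e' ^ n * q ^ ((a' : ℤ) * n ^ 2 + b' * n))
    (th_summable hq hq1 he ha b) (th_summable hq hq1 he' ha' b')

lemma bij_two : Function.Bijective (fun s : Fin 2 × (ℤ × ℤ) =>
    ((s.2.1 + s.2.2 + (s.1 : ℕ), s.2.1 - s.2.2) : ℤ × ℤ)) := by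
  constructor
  · rintro ⟨k, x, y⟩ ⟨k', x', y'⟩ h
    simp only [Prod.mk.injEq] at h ⊢
    refine ⟨Fin.ext ?_, ?_, ?_⟩ <;> omega
  · rintro ⟨u, c⟩
    refine ⟨(⟨((u + c) % 2).toNat, by omega⟩, ((u + c) / 2, (u - c) / 2)), ?_⟩
    simp only [Prod.mk.injEq]
    constructor <;> omega

lemma bij_five1 : Function.Bijective (fun s : Fin 5 × (ℤ × ℤ) =>
    ((2 * s.2.1 - s.2.2, s.2.1 + 2 * s.2.2 + (((s.1 : ℕ) : ℤ) - 2)) : ℤ × ℤ)) := by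
  constructor
  · rintro ⟨k, x, y⟩ ⟨k', x', y'⟩ h
    simp only [Prod.mk.injEq] at h ⊢
    refine ⟨Fin.ext ?_, ?_, ?_⟩ <;> omega
  · rintro ⟨u, c⟩
    refine ⟨(⟨((2 * u + c + 2) % 5).toNat, by omega⟩,
      ((2 * u + c + 2) / 5, 2 * ((2 * u + c + 2) / 5) - u)), ?_⟩
    simp only [Prod.mk.injEq]
    constructor <;> omega

lemma bij_five2 : Function.Bijective (fun s : Fin 5 × (ℤ × ℤ) =>
    ((2 * s.2.1 + s.2.2, -s.2.1 + 2 * s.2.2 + (((s.1 : ℕ) : ℤ) - 2)) : ℤ × ℤ)) := by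
  constructor
  · rintro ⟨k, x, y⟩ ⟨k', x', y'⟩ h
    simp only [Prod.mk.injEq] at h ⊢
    refine ⟨Fin.ext ?_, ?_, ?_⟩ <;> omega
  · rintro ⟨u, c⟩
    refine ⟨(⟨((c - 2 * u + 2) % 5).toNat, by omega⟩,
      (-((c - 2 * u + 2) / 5), u + 2 * ((c - 2 * u + 2) / 5))), ?_⟩
    simp only [Prod.mk.injEq]
    constructor <;> omega

lemma sign_eq {e : ℂ} (he : e = 1 ∨ e = -1) {m n : ℤ} (h : Even (m - n)) : e ^ m = e ^ n := by
  rcases he with rfl | rfl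
  · simp
  · rw [show m = (m - n) + n by ring, zpow_add₀ (by norm_num), h.neg_one_zpow, one_mul]

lemma th_D {q e : ℂ} (hq : q ≠ 0) (hq1 : ‖q‖ < 1) (he : e = 1 ∨ e = -1) {a : ℕ} (ha : 0 < a)
    (b c : ℤ) : th q e a b * th q e a c =
      th q 1 (2 * a) (b + c) * th q 1 (2 * a) (b - c) + e * q ^ ((a : ℤ) + b) *
        (th q 1 (2 * a) (2 * a + b + c) * th q 1 (2 * a) (2 * a + b - c)) := by
  have he0 : e ≠ 0 := by rcases he with rfl | rfl <;> simp
  have hen : ‖e‖ = 1 := by rcases he with rfl | rfl <;> simp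
  have h1 : ‖(1 : ℂ)‖ = 1 := by simp
  have h2a : 0 < 2 * a := by omega
  rw [th_mul hq hq1 hen hen ha ha, tsum_fin_split _ bij_two (th_mul_summable hq hq1 hen hen ha ha b c),
    Fin.sum_univ_two, th_mul hq hq1 h1 h1 h2a h2a, th_mul hq hq1 h1 h1 h2a h2a, ← tsum_mul_left]
  congr 1
  · refine tsum_congr fun z => ?_
    obtain ⟨i, j⟩ := z
    simp only [Fin.val_zero, one_zpow, one_mul]
    rw [mul_mul_mul_comm, ← zpow_add₀ he0, ← zpow_add₀ hq, ← zpow_add₀ hq,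
      sign_eq he (n := 0) (by exact ⟨i, by push_cast; ring⟩), zpow_zero, one_mul]
    congr 1; push_cast; ring
  · refine tsum_congr fun z => ?_
    obtain ⟨i, j⟩ := z
    simp only [Fin.val_one, one_zpow, one_mul]
    rw [mul_mul_mul_comm, ← zpow_add₀ he0, ← zpow_add₀ hq, ← zpow_add₀ hq,
      sign_eq he (n := 1) (by exact ⟨i, by push_cast; ring⟩), zpow_one, mul_assoc, ← zpow_add₀ hq]
    congr 2; push_cast; ring

lemma th_five1 {q : ℂ} (hq : q ≠ 0) (hq1 : ‖q‖ < 1) :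
    th q 1 5 1 * th q (-1) 5 3 = ∑ k : Fin 5, (-1) ^ (((k : ℕ) : ℤ) - 2) *
      q ^ (5 * (((k : ℕ) : ℤ) - 2) ^ 2 + 3 * (((k : ℕ) : ℤ) - 2)) *
      (th (q ^ 5) (-1) 5 (1 + 2 * (((k : ℕ) : ℤ) - 2)) * th (q ^ 5) 1 5 (1 + 4 * (((k : ℕ) : ℤ) - 2))) := by
  have h1 : ‖(1 : ℂ)‖ = 1 := by simp
  have h2 : ‖(-1 : ℂ)‖ = 1 := by simp
  have hQ : ‖q ^ 5‖ < 1 := by rw [norm_pow]; exact pow_lt_one₀ (norm_nonneg _) hq1 (by norm_num)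
  have hQ0 : q ^ 5 ≠ 0 := pow_ne_zero _ hq
  have h5 : 0 < 5 := by norm_num
  rw [th_mul hq hq1 h1 h2 h5 h5, tsum_fin_split _ bij_five1 (th_mul_summable hq hq1 h1 h2 h5 h5 1 3)]
  refine Finset.sum_congr rfl fun k _ => ?_
  rw [th_mul hQ0 hQ h2 h1 h5 h5, ← tsum_mul_left]
  refine tsum_congr fun z => ?_
  obtain ⟨x, y⟩ := z
  generalize ((k : ℕ) : ℤ) - 2 = κ
  simp only [one_zpow, one_mul]
  rw [← zpow_natCast q 5, ← zpow_mul, ← zpow_mul]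
  have e1 : ((-1 : ℂ)) ^ (x + 2 * y + κ) = (-1) ^ κ * (-1) ^ x := by
    rw [← zpow_add₀ (by norm_num)]
    exact sign_eq (Or.inr rfl) ⟨y, by ring⟩
  rw [e1]
  have e2 : q ^ (((5 : ℕ) : ℤ) * (2 * x - y) ^ 2 + (2 * x - y)) *
      q ^ (((5 : ℕ) : ℤ) * (x + 2 * y + κ) ^ 2 + 3 * (x + 2 * y + κ)) =
      q ^ (5 * κ ^ 2 + 3 * κ) * (q ^ (((5 : ℕ) : ℤ) * (((5 : ℕ) : ℤ) * x ^ 2 + (1 + 2 * κ) * x)) *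
        q ^ (((5 : ℕ) : ℤ) * (((5 : ℕ) : ℤ) * y ^ 2 + (1 + 4 * κ) * y))) := by
    simp only [← zpow_add₀ hq]
    congr 1; push_cast; ring
  linear_combination (-1 : ℂ) ^ κ * (-1) ^ x * e2

lemma th_five2 {q : ℂ} (hq : q ≠ 0) (hq1 : ‖q‖ < 1) :
    th q 1 5 4 * th q (-1) 5 3 = ∑ k : Fin 5, (-1) ^ (((k : ℕ) : ℤ) - 2) *
      q ^ (5 * (((k : ℕ) : ℤ) - 2) ^ 2 + 3 * (((k : ℕ) : ℤ) - 2)) *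
      (th (q ^ 5) (-1) 5 (1 - 2 * (((k : ℕ) : ℤ) - 2)) * th (q ^ 5) 1 5 (2 + 4 * (((k : ℕ) : ℤ) - 2))) := by
  have h1 : ‖(1 : ℂ)‖ = 1 := by simp
  have h2 : ‖(-1 : ℂ)‖ = 1 := by simp
  have hQ : ‖q ^ 5‖ < 1 := by rw [norm_pow]; exact pow_lt_one₀ (norm_nonneg _) hq1 (by norm_num)
  have hQ0 : q ^ 5 ≠ 0 := pow_ne_zero _ hq
  have h5 : 0 < 5 := by norm_num
  rw [th_mul hq hq1 h1 h2 h5 h5, tsum_fin_split _ bij_five2 (th_mul_summable hq hq1 h1 h2 h5 h5 4 3)]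
  refine Finset.sum_congr rfl fun k _ => ?_
  rw [th_mul hQ0 hQ h2 h1 h5 h5, ← tsum_mul_left]
  refine tsum_congr fun z => ?_
  obtain ⟨x, y⟩ := z
  generalize ((k : ℕ) : ℤ) - 2 = κ
  simp only [one_zpow, one_mul]
  rw [← zpow_natCast q 5, ← zpow_mul, ← zpow_mul]
  have e1 : ((-1 : ℂ)) ^ (-x + 2 * y + κ) = (-1) ^ κ * (-1) ^ x := by
    rw [← zpow_add₀ (by norm_num)]
    exact sign_eq (Or.inr rfl) ⟨y - x, by ring⟩
  rw [e1]
  have e2 : q ^ (((5 : ℕ) : ℤ) * (2 * x + y) ^ 2 + 4 * (2 * x + y)) *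
      q ^ (((5 : ℕ) : ℤ) * (-x + 2 * y + κ) ^ 2 + 3 * (-x + 2 * y + κ)) =
      q ^ (5 * κ ^ 2 + 3 * κ) * (q ^ (((5 : ℕ) : ℤ) * (((5 : ℕ) : ℤ) * x ^ 2 + (1 - 2 * κ) * x)) *
        q ^ (((5 : ℕ) : ℤ) * (((5 : ℕ) : ℤ) * y ^ 2 + (2 + 4 * κ) * y))) := by
    simp only [← zpow_add₀ hq]
    congr 1; push_cast; ring
  linear_combination (-1 : ℂ) ^ κ * (-1) ^ x * e2

lemma th_scale (q e : ℂ) (a s : ℕ) (b : ℤ) : th (q ^ s) e a b = th q e (s * a) (s * b) := by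
  unfold th
  refine tsum_congr fun n => ?_
  rw [← zpow_natCast q s, ← zpow_mul]; congr 2; push_cast; ring

lemma D5 {q e : ℂ} (hq : q ≠ 0) (hq1 : ‖q‖ < 1) (he : e = 1 ∨ e = -1) (b c : ℤ) :
    th q e 5 b * th q e 5 c = th q 1 10 (b + c) * th q 1 10 (b - c) + e * q ^ (5 - b) *
        (th q 1 10 (10 - b - c) * th q 1 10 (10 - b + c)) := by
  have hT : ∀ d : ℤ, th q 1 10 (10 + d) = q ^ (-d) * th q 1 10 (10 - d) := by
    intro d
    rw [th_shift hq (Or.inl rfl), ← th_neg (Or.inl rfl)]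
    push_cast
    rw [one_mul]; congr 2 <;> ring
  have h := th_D hq hq1 he (a := 5) (by norm_num) b c
  norm_num only at h
  rw [h, show (10 : ℤ) + b + c = 10 + (b + c) by ring, show (10 : ℤ) + b - c = 10 + (b - c) by ring,
    hT, hT, show (10 : ℤ) - (b + c) = 10 - b - c by ring,
    show (10 : ℤ) - (b - c) = 10 - b + c by ring]
  congr 1
  have : q ^ (5 - b) = q ^ (5 + b) * q ^ (-(b + c)) * q ^ (-(b - c)) := by
    rw [← zpow_add₀ hq, ← zpow_add₀ hq]; congr 1; ring
  rw [this]; ring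

lemma W0 {q : ℂ} (hq : q ≠ 0) (hq1 : ‖q‖ < 1) :
    th q 1 5 4 * th q 1 5 2 ^ 2 * th q 1 5 0 - q * th q 1 5 5 * th q 1 5 3 ^ 2 * th q 1 5 1 =
      th q (-1) 5 2 ^ 2 * th q (-1) 5 4 * th q (-1) 5 0 := by
  have p1 := D5 hq hq1 (Or.inl rfl) 4 0
  have p2 := D5 hq hq1 (Or.inl rfl) 2 2
  have p3 := D5 hq hq1 (Or.inl rfl) 5 1
  have p4 := D5 hq hq1 (Or.inl rfl) 3 3
  have p5 := D5 hq hq1 (Or.inr rfl) 4 0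
  have p6 := D5 hq hq1 (Or.inr rfl) 2 2
  norm_num [zpow_ofNat] at p1 p2 p3 p4 p5 p6
  rw [show th q 1 5 4 * th q 1 5 2 ^ 2 * th q 1 5 0 - q * th q 1 5 5 * th q 1 5 3 ^ 2 * th q 1 5 1 =
    (th q 1 5 4 * th q 1 5 0) * (th q 1 5 2 * th q 1 5 2) -
    q * (th q 1 5 5 * th q 1 5 1) * (th q 1 5 3 * th q 1 5 3) by ring,
    show th q (-1) 5 2 ^ 2 * th q (-1) 5 4 * th q (-1) 5 0 =
    (th q (-1) 5 2 * th q (-1) 5 2) * (th q (-1) 5 4 * th q (-1) 5 0) by ring,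
    p1, p2, p3, p4, p5, p6]
  ring

lemma W1 {q : ℂ} (hq : q ≠ 0) (hq1 : ‖q‖ < 1) :
    th q 1 5 4 ^ 2 * th q 1 5 2 * th q 1 5 0 - th q 1 5 5 * th q 1 5 3 * th q 1 5 1 ^ 2 =
      - (th q (-1) 5 4 ^ 2 * th q (-1) 5 2 * th q (-1) 5 0) := by
  have p1 := D5 hq hq1 (Or.inl rfl) 4 4
  have p2 := D5 hq hq1 (Or.inl rfl) 2 0
  have p3 := D5 hq hq1 (Or.inl rfl) 5 3
  have p4 := D5 hq hq1 (Or.inl rfl) 1 1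
  have p5 := D5 hq hq1 (Or.inr rfl) 4 4
  have p6 := D5 hq hq1 (Or.inr rfl) 2 0
  norm_num [zpow_ofNat] at p1 p2 p3 p4 p5 p6
  rw [show th q 1 5 4 ^ 2 * th q 1 5 2 * th q 1 5 0 - th q 1 5 5 * th q 1 5 3 * th q 1 5 1 ^ 2 =
    (th q 1 5 4 * th q 1 5 4) * (th q 1 5 2 * th q 1 5 0) -
    (th q 1 5 5 * th q 1 5 3) * (th q 1 5 1 * th q 1 5 1) by ring,
    show th q (-1) 5 4 ^ 2 * th q (-1) 5 2 * th q (-1) 5 0 =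
    (th q (-1) 5 4 * th q (-1) 5 4) * (th q (-1) 5 2 * th q (-1) 5 0) by ring,
    p1, p2, p3, p4, p5, p6]
  ring

lemma W2 {q : ℂ} (hq : q ≠ 0) (hq1 : ‖q‖ < 1) :
    th q 1 5 3 ^ 2 * th q 1 5 1 ^ 2 - q * th q 1 5 4 ^ 2 * th q 1 5 2 ^ 2 =
      th q (-1) 5 4 * th q (-1) 5 2 * th q (-1) 5 0 ^ 2 := by
  have p1 := D5 hq hq1 (Or.inl rfl) 3 3
  have p2 := D5 hq hq1 (Or.inl rfl) 1 1
  have p3 := D5 hq hq1 (Or.inl rfl) 4 4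
  have p4 := D5 hq hq1 (Or.inl rfl) 2 2
  have p5 := D5 hq hq1 (Or.inr rfl) 4 2
  have p6 := D5 hq hq1 (Or.inr rfl) 0 0
  norm_num [zpow_ofNat] at p1 p2 p3 p4 p5 p6
  rw [show th q 1 5 3 ^ 2 * th q 1 5 1 ^ 2 - q * th q 1 5 4 ^ 2 * th q 1 5 2 ^ 2 =
    (th q 1 5 3 * th q 1 5 3) * (th q 1 5 1 * th q 1 5 1) -
    q * (th q 1 5 4 * th q 1 5 4) * (th q 1 5 2 * th q 1 5 2) by ring,
    show th q (-1) 5 4 * th q (-1) 5 2 * th q (-1) 5 0 ^ 2 =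
    (th q (-1) 5 4 * th q (-1) 5 2) * (th q (-1) 5 0 * th q (-1) 5 0) by ring,
    p1, p2, p3, p4, p5, p6]
  ring

lemma th_neg_five {q : ℂ} (hq : q ≠ 0) (hq1 : ‖q‖ < 1) : th q (-1) 5 5 = 0 := by
  have := th_jtp hq hq1 (Or.inr rfl) (a := 5) (b := 5) (by norm_num) le_rfl
  norm_num only at this
  rw [this, ph_zero hq1 (by norm_num)]
  simp

lemma five1 {q : ℂ} (hq : q ≠ 0) (hq1 : ‖q‖ < 1) :
    th q 1 5 1 * th q (-1) 5 3 = th (q ^ 5) (-1) 5 1 * th (q ^ 5) 1 5 1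
      - q ^ 8 * (th (q ^ 5) (-1) 5 3 * th (q ^ 5) 1 5 5)
      - q ^ 2 * (th (q ^ 5) (-1) 5 1 * th (q ^ 5) 1 5 3)
      + q ^ 4 * (th (q ^ 5) (-1) 5 3 * th (q ^ 5) 1 5 3) := by
  have hQ : ‖q ^ 5‖ < 1 := by rw [norm_pow]; exact pow_lt_one₀ (norm_nonneg _) hq1 (by norm_num)
  have hQ0 : q ^ 5 ≠ 0 := pow_ne_zero _ hq
  have h7 := th_shift hQ0 (Or.inl rfl) 5 7
  norm_num only at h7
  have l := fun b => th_neg (q := q ^ 5) (Or.inl rfl) 5 b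
  have r := fun b => th_neg (q := q ^ 5) (Or.inr rfl) 5 b
  rw [l] at h7
  rw [th_five1 hq hq1, Fin.sum_univ_five]
  norm_num [l, r, th_neg_five hQ0 hQ, h7, zpow_ofNat]
  field_simp
  ring

lemma five2 {q : ℂ} (hq : q ≠ 0) (hq1 : ‖q‖ < 1) :
    th q 1 5 4 * th q (-1) 5 3 = th (q ^ 5) (-1) 5 1 * th (q ^ 5) 1 5 2
      - q ^ 2 * (th (q ^ 5) (-1) 5 3 * th (q ^ 5) 1 5 2)
      - q ^ 3 * (th (q ^ 5) (-1) 5 1 * th (q ^ 5) 1 5 4)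
      + q * (th (q ^ 5) (-1) 5 3 * th (q ^ 5) 1 5 0) := by
  have hQ : ‖q ^ 5‖ < 1 := by rw [norm_pow]; exact pow_lt_one₀ (norm_nonneg _) hq1 (by norm_num)
  have hQ0 : q ^ 5 ≠ 0 := pow_ne_zero _ hq
  have h6 := th_shift hQ0 (Or.inl rfl) 5 6
  have h10 := th_shift hQ0 (Or.inl rfl) 5 10
  norm_num only at h6 h10
  have l := fun b => th_neg (q := q ^ 5) (Or.inl rfl) 5 b
  have r := fun b => th_neg (q := q ^ 5) (Or.inr rfl) 5 b
  rw [l] at h6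
  rw [th_five2 hq hq1, Fin.sum_univ_five]
  norm_num [l, r, th_neg_five hQ0 hQ, h6, h10, zpow_ofNat]
  field_simp
  ring

/-- Product over a pair of residues modulo ten. -/
noncomputable def pr (q c : ℂ) (i : ℕ) : ℂ := ph q c 10 i * ph q c 10 (10 - i)

lemma alg {q Q E A1 A2 A3 A4 A5 B0 B1 B2 B3 B4 B5 Φ Ψ f : ℂ} (hE : E ≠ 0)
    (h1 : A1 ≠ 0) (h2 : A2 ≠ 0) (h3 : A3 ≠ 0) (h4 : A4 ≠ 0) (h5 : A5 ≠ 0)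
    (r1 : A4 = A2 * A3 * B2 * B3) (r2 : A2 = A1 * A4 * B1 * B4) (r5 : A5 * B5 * B0 = 2)
    (w0 : B1 * B3 ^ 2 * B5 - Q * B0 * B2 ^ 2 * B4 = A3 ^ 2 * A1 * A5)
    (w1 : B1 ^ 2 * B3 * B5 - B0 * B2 * B4 ^ 2 = -(A1 ^ 2 * A3 * A5))
    (w2 : B2 ^ 2 * B4 ^ 2 - Q * B1 ^ 2 * B3 ^ 2 = A1 * A3 * A5 ^ 2)
    (hΦ : Φ = B1 ^ 2 * B3 ^ 2 * B5 * (A2 * A4 * E))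
    (hΨ : Ψ = B0 * B2 ^ 2 * B4 ^ 2 * (A2 * A4 * E))
    (hf : f * ((A1 * A2 * A3 * A4) ^ 2 * A5 * E ^ 2 * (A2 * A4 * E)) =
      E * A4 * (Φ * (E * B4) - Q * (Ψ * (E * B1)))
      - q ^ 2 * (E * A4 * (Φ * (E * B2) - Ψ * (E * B3)))
      + q ^ 3 * (E * A2 * (Ψ * (E * B5) - Q * (Φ * (E * B0))))
      + q ^ 4 * (E * A2 * (Φ * (E * B2) - Ψ * (E * B3)))) :
    f = (A1 ^ 2 * A2 * A4 ^ 2)⁻¹ + q ^ 2 * (A2 ^ 3 * A3 ^ 2)⁻¹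
      + q ^ 3 * (2 * (A1 * A2 * A3 * A4 ^ 2)⁻¹) - q ^ 4 * (A2 ^ 2 * A3 ^ 2 * A4)⁻¹ := by
  have s0 : Φ * (E * B4) - Q * (Ψ * (E * B1)) = E ^ 2 * A2 ^ 2 * A3 ^ 2 * A5 := by
    rw [hΦ, hΨ]
    linear_combination E ^ 2 * A2 * A4 * B1 * B4 * w0 - E ^ 2 * A2 * A3 ^ 2 * A5 * r2
  have s1 : Φ * (E * B2) - Ψ * (E * B3) = -(E ^ 2 * A4 ^ 2 * A1 ^ 2 * A5) := by
    rw [hΦ, hΨ]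
    linear_combination E ^ 2 * A2 * A4 * B2 * B3 * w1 + E ^ 2 * A4 * A1 ^ 2 * A5 * r1
  have s2 : Ψ * (E * B5) - Q * (Φ * (E * B0)) = 2 * E ^ 2 * A1 * A2 * A3 * A4 * A5 := by
    rw [hΦ, hΨ]
    linear_combination E ^ 2 * A2 * A4 * B0 * B5 * w2 + E ^ 2 * A2 * A4 * A1 * A3 * A5 * r5
  rw [s0, s1, s2] at hf
  have hne : (A1 * A2 * A3 * A4) ^ 2 * A5 * E ^ 2 * (A2 * A4 * E) ≠ 0 := by positivity
  refine mul_right_cancel₀ hne (hf.trans ?_)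
  field_simp
  ring

lemma main_id {q : ℂ} (hq : q ≠ 0) (hq1 : ‖q‖ < 1) :
    ph q (-1) 10 2 * ph q (-1) 10 8 * (ph q 1 5 2 * ph q 1 5 3) ^ 2 =
      (pr (q ^ 5) (-1) 1 ^ 2 * pr (q ^ 5) (-1) 2 * pr (q ^ 5) (-1) 4 ^ 2)⁻¹
      + q ^ 2 * (pr (q ^ 5) (-1) 2 ^ 3 * pr (q ^ 5) (-1) 3 ^ 2)⁻¹
      + q ^ 3 * (2 * (pr (q ^ 5) (-1) 1 * pr (q ^ 5) (-1) 2 * pr (q ^ 5) (-1) 3 *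
          pr (q ^ 5) (-1) 4 ^ 2)⁻¹)
      - q ^ 4 * (pr (q ^ 5) (-1) 2 ^ 2 * pr (q ^ 5) (-1) 3 ^ 2 * pr (q ^ 5) (-1) 4)⁻¹ := by
  have hQ : ‖q ^ 5‖ < 1 := by rw [norm_pow]; exact pow_lt_one₀ (norm_nonneg _) hq1 (by norm_num)
  have hQ0 : q ^ 5 ≠ 0 := pow_ne_zero _ hq
  have F1 := five1 hq hq1
  have F2 := five2 hq hq1
  -- the square
  obtain ⟨w, hw⟩ : ∃ w : ℂ, w ^ 2 = q := ⟨q ^ (2⁻¹ : ℂ), by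
    rw [← Complex.cpow_nat_mul]; norm_num⟩
  have hw0 : w ≠ 0 := by rintro rfl; apply hq; rw [← hw]; norm_num
  have hw1 : ‖w‖ < 1 := by
    by_contra h
    push Not at h
    have : 1 ≤ ‖w‖ ^ 2 := one_le_pow₀ h
    rw [← norm_pow, hw] at this
    linarith
  have j1 := th_jtp hw0 hw1 (Or.inl rfl) (a := 5) (b := 1) (by norm_num) (by norm_num)
  have d1 := th_D hw0 hw1 (Or.inl rfl) (a := 5) (by norm_num) 1 1
  have sc := fun b => th_scale w 1 5 2 b
  have sp := fun c m j => ph_scale w c m j 2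
  rw [hw] at sc sp
  have e1 : th w 1 5 1 = ph q (-1) 5 5 * (ph q 1 5 3 * ph q 1 5 2) := by
    rw [sp, sp, sp]; exact_mod_cast j1
  have e2 : th w 1 5 1 * th w 1 5 1 = th q 1 5 1 * th q 1 5 0 +
      q ^ 3 * (th q 1 5 6 * th q 1 5 5) := by
    rw [sc, sc, sc, sc, d1, ← hw, ← pow_mul]
    norm_num [zpow_ofNat]
  have h6 := th_shift hq (Or.inl rfl) 5 6
  norm_num only at h6
  rw [th_neg (Or.inl rfl)] at h6
  have hΦ : th q 1 5 0 = th (q ^ 5) 1 1 0 := by rw [th_scale]; norm_num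
  have hΨ : th q 1 5 5 = th (q ^ 5) 1 1 1 := by rw [th_scale]; norm_num
  have e3 : (ph q (-1) 5 5 * (ph q 1 5 3 * ph q 1 5 2)) ^ 2 = th q 1 5 1 * th (q ^ 5) 1 1 0 +
      q ^ 2 * (th q 1 5 4 * th (q ^ 5) 1 1 1) := by
    rw [← e1, sq, e2, h6, hΦ, hΨ]
    norm_num
    field_simp
  have e4 : th q (-1) 5 3 = ph q (-1) 10 10 * (ph q (-1) 10 8 * ph q (-1) 10 2) := by
    exact_mod_cast th_jtp hq hq1 (Or.inr rfl) (a := 5) (b := 3) (by norm_num) (by norm_num)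
  have e5 : ph q (-1) 5 5 = ph (q ^ 5) (-1) 1 1 := by rw [ph_scale]
  have e6 : ph q (-1) 10 10 = ph (q ^ 5) (-1) 2 2 := by rw [ph_scale]
  clear sc sp d1 j1 e1 e2 hw0 hw1 hw h6 hΦ hΨ
  generalize hQe : q ^ 5 = Q at *
  -- thetas
  have J : ∀ (e : ℂ) (b : ℕ), (e = 1 ∨ e = -1) → b ≤ 5 → th Q e 5 b =
      ph Q (-1) 10 10 * (ph Q e 10 (5 + b) * ph Q e 10 (5 - b)) := fun e b he hb =>
    th_jtp hQ0 hQ he (by norm_num) hb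
  have ep : ∀ b : ℕ, b ≤ 5 → th Q 1 5 b = ph Q (-1) 10 10 * pr Q 1 (5 - b) := by
    intro b hb
    rw [J 1 b (Or.inl rfl) hb, pr, show 10 - (5 - b) = 5 + b by omega]; ring
  have em : ∀ b : ℕ, b ≤ 5 → th Q (-1) 5 b = ph Q (-1) 10 10 * pr Q (-1) (5 - b) := by
    intro b hb
    rw [J (-1) b (Or.inr rfl) hb, pr, show 10 - (5 - b) = 5 + b by omega]; ring
  have p0 := ep 0 (by norm_num)
  have p1 := ep 1 (by norm_num)
  have p2 := ep 2 (by norm_num)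
  have p3 := ep 3 (by norm_num)
  have p4 := ep 4 (by norm_num)
  have p5 := ep 5 (by norm_num)
  have m0 := em 0 (by norm_num)
  have m1 := em 1 (by norm_num)
  have m2 := em 2 (by norm_num)
  have m3 := em 3 (by norm_num)
  have m4 := em 4 (by norm_num)
  norm_num only [Nat.cast_ofNat, Nat.cast_zero, Nat.cast_one] at p0 p1 p2 p3 p4 p5 m0 m1 m2 m3 m4
  have w0 := W0 hQ0 hQ
  have w1 := W1 hQ0 hQ
  have w2 := W2 hQ0 hQ
  rw [p0, p1, p2, p3, p4, p5, m0, m2, m4] at w0 w1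
  rw [p1, p2, p3, p4, m0, m2, m4] at w2
  have hn : ∀ (c : ℂ) (i : ℕ), (c = 1 ∨ c = -1) → 0 < i → ph Q c 10 i ≠ 0 := by
    intro c i hc hi
    exact ph_ne hQ (by rcases hc with rfl | rfl <;> simp) (by norm_num) hi
  have hE : ph Q (-1) 10 10 ≠ 0 := hn _ _ (Or.inr rfl) (by norm_num)
  have hA : ∀ i : ℕ, 0 < i → i < 10 → pr Q (-1) i ≠ 0 := fun i h h' =>
    mul_ne_zero (hn _ _ (Or.inr rfl) h) (hn _ _ (Or.inr rfl) (by omega))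
  -- doubling
  have db : ∀ j, ph Q (-1) 10 (2 * j) = (ph Q (-1) 10 j * ph Q (-1) 10 (5 + j)) *
      (ph Q 1 10 j * ph Q 1 10 (5 + j)) := by
    intro j
    have h1 := ph_dbl hQ (m := 5) (by norm_num) j
    rw [ph_split hQ (by norm_num) j (r := 2) (by norm_num),
      ph_split hQ (by norm_num) j (r := 2) (by norm_num)] at h1
    simpa [Finset.prod_range_succ] using h1
  have db1 := db 1
  have db2 := db 2
  have db3 := db 3
  have db4 := db 4
  have db5 := db 5
  norm_num only at db1 db2 db3 db4 db5
  have q0 : pr Q 1 0 = 2 * ph Q 1 10 10 ^ 2 := by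
    rw [pr, ph_zero hQ (by norm_num)]; norm_num; ring
  have x5 : ph Q (-1) 10 5 * ph Q 1 10 5 * ph Q 1 10 10 = 1 := by
    refine mul_left_cancel₀ hE ?_
    linear_combination -db5
  have u1 : ph Q 1 2 1 = ph Q 1 10 1 * ph Q 1 10 3 * ph Q 1 10 5 * ph Q 1 10 7 * ph Q 1 10 9 := by
    rw [ph_split hQ (by norm_num) 1 (r := 5) (by norm_num)]
    simp [Finset.prod_range_succ]
  have u2 : ∀ c, ph Q c 2 2 =
      ph Q c 10 2 * ph Q c 10 4 * ph Q c 10 6 * ph Q c 10 8 * ph Q c 10 10 := by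
    intro c
    rw [ph_split hQ (by norm_num) 2 (r := 5) (by norm_num)]
    simp [Finset.prod_range_succ]
  have u3 : ph Q (-1) 1 1 = ph Q (-1) 10 1 * ph Q (-1) 10 2 * ph Q (-1) 10 3 * ph Q (-1) 10 4 *
      ph Q (-1) 10 5 * ph Q (-1) 10 6 * ph Q (-1) 10 7 * ph Q (-1) 10 8 * ph Q (-1) 10 9 *
      ph Q (-1) 10 10 := by
    rw [ph_split hQ (by norm_num) 1 (r := 10) (by norm_num)]
    simp [Finset.prod_range_succ]
  have v0 : th Q 1 1 0 = ph Q (-1) 2 2 * (ph Q 1 2 1 * ph Q 1 2 1) := by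
    exact_mod_cast th_jtp hQ0 hQ (Or.inl rfl) (a := 1) (b := 0) (by norm_num) (by norm_num)
  have v1 : th Q 1 1 1 = ph Q (-1) 2 2 * (ph Q 1 2 2 * ph Q 1 2 0) := by
    exact_mod_cast th_jtp hQ0 hQ (Or.inl rfl) (a := 1) (b := 1) (by norm_num) (by norm_num)
  rw [ph_zero hQ (by norm_num)] at v1
  have hE4 : ph Q (-1) 10 10 ^ 4 ≠ 0 := pow_ne_zero _ hE
  refine alg (E := ph Q (-1) 10 10) (Q := Q) (A5 := pr Q (-1) 5) (B0 := pr Q 1 0) (B1 := pr Q 1 1)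
    (B2 := pr Q 1 2) (B3 := pr Q 1 3) (B4 := pr Q 1 4) (B5 := pr Q 1 5)
    (Φ := th Q 1 1 0) (Ψ := th Q 1 1 1) hE (hA 1 ?_ ?_) (hA 2 ?_ ?_) (hA 3 ?_ ?_) (hA 4 ?_ ?_)
    (hA 5 ?_ ?_) ?_ ?_ ?_ ?_ ?_ ?_ ?_ ?_ ?_
  any_goals norm_num only
  · simp only [pr]; norm_num only
    linear_combination ph Q (-1) 10 6 * db2 + (ph Q (-1) 10 2 * ph Q (-1) 10 7 *
      (ph Q 1 10 2 * ph Q 1 10 7)) * db3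
  · simp only [pr]; norm_num only
    linear_combination ph Q (-1) 10 8 * db1 + (ph Q (-1) 10 1 * ph Q (-1) 10 6 *
      (ph Q 1 10 1 * ph Q 1 10 6)) * db4
  · rw [q0]; simp only [pr]; norm_num only
    linear_combination 2 * (ph Q (-1) 10 5 * ph Q 1 10 5 * ph Q 1 10 10 + 1) * x5
  · refine mul_left_cancel₀ hE4 ?_
    linear_combination w0
  · refine mul_left_cancel₀ hE4 ?_
    linear_combination w1
  · refine mul_left_cancel₀ hE4 ?_
    linear_combination w2
  · rw [v0, u1, u2]; simp only [pr]; norm_num only; ring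
  · rw [v1, u2, u2, q0]; simp only [pr]; norm_num only; ring
  · have hEE : (pr Q (-1) 1 * pr Q (-1) 2 * pr Q (-1) 3 * pr Q (-1) 4) ^ 2 * pr Q (-1) 5 *
        ph Q (-1) 10 10 ^ 2 * (pr Q (-1) 2 * pr Q (-1) 4 * ph Q (-1) 10 10) =
        ph q (-1) 5 5 ^ 2 * ph q (-1) 10 10 := by
      rw [e5, e6, u2, u3]; simp only [pr]; norm_num only; ring
    rw [hEE, ← m1, ← m3, ← p0, ← p1, ← p2, ← p3, ← p4, ← p5]
    have e7 : ph q (-1) 10 2 * ph q (-1) 10 8 * (ph q 1 5 2 * ph q 1 5 3) ^ 2 *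
        (ph q (-1) 5 5 ^ 2 * ph q (-1) 10 10) = th q (-1) 5 3 *
        (ph q (-1) 5 5 * (ph q 1 5 3 * ph q 1 5 2)) ^ 2 := by rw [e4]; ring
    rw [e7, e3]
    rw [← hQe] at *
    linear_combination th (q ^ 5) 1 1 0 * F1 + q ^ 2 * th (q ^ 5) 1 1 1 * F2

/-- A function given on the unit disc by a power series with nonnegative coefficients,
positive on `S`, with constant coefficient at least one. -/
def Good (S : ℕ → Prop) (F : ℂ → ℂ) : Prop :=
  ∃ a : ℕ → ℝ, (∀ n, 0 ≤ a n) ∧ 1 ≤ a 0 ∧ (∀ n, S n → 0 < a n) ∧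
    ∀ q : ℂ, ‖q‖ < 1 → HasSum (fun n : ℕ => (a n : ℂ) * q ^ n) (F q)

/-- Cauchy product. -/
def cau (a b : ℕ → ℝ) (n : ℕ) : ℝ := ∑ p ∈ Finset.HasAntidiagonal.antidiagonal n, a p.1 * b p.2

lemma cau_ge {a b : ℕ → ℝ} (ha : ∀ n, 0 ≤ a n) (hb : ∀ n, 0 ≤ b n) (i j : ℕ) :
    a i * b j ≤ cau a b (i + j) :=
  Finset.single_le_sum (f := fun p : ℕ × ℕ => a p.1 * b p.2)
    (fun p _ => mul_nonneg (ha _) (hb _)) (a := (i, j)) (by simp)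

lemma cau_nonneg {a b : ℕ → ℝ} (ha : ∀ n, 0 ≤ a n) (hb : ∀ n, 0 ≤ b n) (n : ℕ) :
    0 ≤ cau a b n := Finset.sum_nonneg fun _ _ => mul_nonneg (ha _) (hb _)

lemma cau_hasSum {a b : ℕ → ℝ} {q x y : ℂ} (hx : HasSum (fun n : ℕ => (a n : ℂ) * q ^ n) x)
    (hy : HasSum (fun n : ℕ => (b n : ℂ) * q ^ n) y) :
    HasSum (fun n : ℕ => (cau a b n : ℂ) * q ^ n) (x * y) := by
  have h1 := hx.summable.norm
  have h2 := hy.summable.norm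
  have h3 := tsum_mul_tsum_eq_tsum_sum_antidiagonal_of_summable_norm h1 h2
  have h4 := (summable_norm_sum_mul_antidiagonal_of_summable_norm h1 h2).of_norm
  rw [hx.tsum_eq, hy.tsum_eq] at h3
  have h5 := h4.hasSum
  rw [← h3] at h5
  refine h5.congr_fun ?_ |> fun h => h
  intro n
  rw [cau]
  push_cast
  rw [Finset.sum_mul]
  refine Finset.sum_congr rfl fun p hp => ?_
  rw [← Finset.HasAntidiagonal.mem_antidiagonal.1 hp, pow_add]; ring

lemma Good.mul {S T : ℕ → Prop} {F G : ℂ → ℂ} (hF : Good S F) (hG : Good T G) :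
    Good (fun n => S n ∨ T n ∨ ∃ i j, n = i + j ∧ S i ∧ T j) (fun q => F q * G q) := by
  obtain ⟨a, a0, a1, a2, a3⟩ := hF
  obtain ⟨b, b0, b1, b2, b3⟩ := hG
  refine ⟨cau a b, cau_nonneg a0 b0, ?_, ?_, fun q hq => cau_hasSum (a3 q hq) (b3 q hq)⟩
  · exact (one_le_mul_of_one_le_of_one_le a1 b1).trans (cau_ge a0 b0 0 0)
  · rintro n (h | h | ⟨i, j, rfl, hi, hj⟩)
    · exact (mul_pos (a2 n h) (by linarith)).trans_le (cau_ge a0 b0 n 0)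
    · have := cau_ge a0 b0 0 n
      rw [zero_add] at this
      exact (mul_pos (by linarith) (b2 n h)).trans_le this
    · exact (mul_pos (a2 i hi) (b2 j hj)).trans_le (cau_ge a0 b0 i j)

lemma Good.mono {S T : ℕ → Prop} {F G : ℂ → ℂ} (hF : Good S F) (h : ∀ n, T n → S n)
    (hFG : ∀ q, ‖q‖ < 1 → F q = G q) : Good T G := by
  obtain ⟨a, a0, a1, a2, a3⟩ := hF
  exact ⟨a, a0, a1, fun n hn => a2 n (h n hn), fun q hq => hFG q hq ▸ a3 q hq⟩

/-- Indicator of multiples. -/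
def ind (m n : ℕ) : ℝ := if m ∣ n then 1 else 0

lemma ind_nonneg (m n : ℕ) : 0 ≤ ind m n := by unfold ind; split_ifs <;> norm_num

lemma ind_hasSum {q : ℂ} (hq : ‖q‖ < 1) {m : ℕ} (hm : 0 < m) :
    HasSum (fun n : ℕ => (ind m n : ℂ) * q ^ n) (1 + (-1) * q ^ m)⁻¹ := by
  have h1 : ‖q ^ m‖ < 1 := by
    rw [norm_pow]; exact pow_lt_one₀ (norm_nonneg _) hq hm.ne'
  have h2 := hasSum_geometric_of_norm_lt_one h1
  rw [show 1 + (-1) * q ^ m = 1 - q ^ m by ring]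
  have hi : Function.Injective (fun k : ℕ => m * k) := fun x y h => Nat.eq_of_mul_eq_mul_left hm h
  refine (hi.hasSum_iff ?_).1 ?_
  · intro n hn
    have : ¬ m ∣ n := fun ⟨k, hk⟩ => hn ⟨k, hk.symm⟩
    simp [ind, this]
  · refine h2.congr_fun ?_ |> fun h => h
    intro k
    simp [ind, pow_mul]

/-- Coefficients of the finite products. -/
def fc (i : ℕ) : ℕ → ℕ → ℝ
  | 0 => fun n => if n = 0 then 1 else 0
  | N + 1 => cau (fc i N) (ind (10 * N + i))

lemma fc_nonneg (i : ℕ) : ∀ N n, 0 ≤ fc i N n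
  | 0, n => by unfold fc; split_ifs <;> norm_num
  | N + 1, n => cau_nonneg (fc_nonneg i N) (ind_nonneg _) n

lemma fc_mono (i n : ℕ) : Monotone (fun N => fc i N n) := by
  refine monotone_nat_of_le_succ fun N => ?_
  have := cau_ge (fc_nonneg i N) (ind_nonneg (10 * N + i)) n 0
  simpa [ind, fc] using this

lemma fc_hasSum {q : ℂ} (hq : ‖q‖ < 1) {i : ℕ} (hi : 0 < i) : ∀ N : ℕ,
    HasSum (fun n : ℕ => (fc i N n : ℂ) * q ^ n)
      (∏ k ∈ Finset.range N, (1 + (-1) * q ^ (10 * k + i)))⁻¹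
  | 0 => by
    have := hasSum_ite_eq (0 : ℕ) (1 : ℂ)
    simp only [Finset.range_zero, Finset.prod_empty, inv_one]
    refine this.congr_fun ?_ |> fun h => h
    intro n
    by_cases hn : n = 0 <;> simp [fc, hn]
  | N + 1 => by
    rw [Finset.prod_range_succ, mul_inv]
    exact cau_hasSum (fc_hasSum hq hi N) (ind_hasSum hq (by omega))

lemma ph_tend {q : ℂ} (hq : ‖q‖ < 1) {i : ℕ} (hi : 0 < i) :
    Filter.Tendsto (fun N => (∏ k ∈ Finset.range N, (1 + (-1) * q ^ (10 * k + i)))⁻¹)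
      Filter.atTop (nhds (ph q (-1) 10 i)⁻¹) :=
  ((ph_mult hq (by norm_num) i).tendsto_prod_tprod_nat).inv₀
    (ph_ne hq (by simp) (by norm_num) hi)

lemma fc_bound {r : ℝ} (h0 : 0 < r) (h1 : r < 1) {i : ℕ} (hi : 0 < i) :
    ∃ C : ℝ, ∀ N n, fc i N n * r ^ n ≤ C := by
  have hr : ‖(r : ℂ)‖ < 1 := by simpa [abs_of_pos h0] using h1
  obtain ⟨C, hC⟩ := (ph_tend hr hi).norm.bddAbove_range
  refine ⟨C, fun N n => ?_⟩
  refine le_trans ?_ (hC ⟨N, rfl⟩)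
  have h := fc_hasSum hr hi N
  have h2 : HasSum (fun n : ℕ => fc i N n * r ^ n)
      (∏ k ∈ Finset.range N, (1 + (-1) * r ^ (10 * k + i)))⁻¹ := by
    exact_mod_cast h
  have h3 := le_hasSum h2 n fun j _ => mul_nonneg (fc_nonneg i N j) (by positivity)
  refine h3.trans ?_
  refine (le_abs_self _).trans (le_of_eq ?_)
  rw [← Real.norm_eq_abs, ← Complex.norm_real]
  push_cast
  rfl

lemma good_ph {i : ℕ} (hi : 0 < i) : Good (fun n => i ∣ n) (fun q => (ph q (-1) 10 i)⁻¹) := by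
  have hb : ∀ n, BddAbove (Set.range fun N => fc i N n) := by
    intro n
    obtain ⟨C, hC⟩ := fc_bound (r := 1 / 2) (by norm_num) (by norm_num) hi
    refine ⟨C * 2 ^ n, ?_⟩
    rintro _ ⟨N, rfl⟩
    have := hC N n
    rw [div_pow, one_pow, mul_one_div, div_le_iff₀ (by positivity)] at this
    exact this
  have ht : ∀ n, Filter.Tendsto (fun N => fc i N n) Filter.atTop (nhds (⨆ N, fc i N n)) :=
    fun n => tendsto_atTop_ciSup (fc_mono i n) (hb n)
  have hge : ∀ N n, fc i N n ≤ ⨆ N, fc i N n := fun N n => le_ciSup (hb n) N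
  have h01 : fc i 0 0 = 1 := by simp [fc]
  refine ⟨fun n => ⨆ N, fc i N n, fun n => (fc_nonneg i 0 n).trans (hge 0 n), ?_, ?_, ?_⟩
  · rw [← h01]; exact hge 0 0
  · intro n hn
    refine lt_of_lt_of_le ?_ (hge 1 n)
    have := cau_ge (fc_nonneg i 0) (ind_nonneg (10 * 0 + i)) 0 n
    rw [h01, zero_add, one_mul] at this
    refine lt_of_lt_of_le ?_ this
    simp [ind, hn]
  · intro q hq
    obtain ⟨r, hr1, hr2⟩ := exists_between hq
    have hr0 : 0 < r := (norm_nonneg q).trans_lt hr1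
    obtain ⟨C, hC⟩ := fc_bound hr0 hr2 hi
    have hx : ‖q‖ / r < 1 := (div_lt_one hr0).2 hr1
    have hs : Summable (fun n : ℕ => C * (‖q‖ / r) ^ n) :=
      (summable_geometric_of_lt_one (by positivity) hx).mul_left C
    have hbd : ∀ N n, ‖(fc i N n : ℂ) * q ^ n‖ ≤ C * (‖q‖ / r) ^ n := by
      intro N n
      rw [norm_mul, Complex.norm_real, Real.norm_of_nonneg (fc_nonneg i N n), norm_pow, div_pow,
        mul_div_assoc', le_div_iff₀ (by positivity)]
      calc fc i N n * ‖q‖ ^ n * r ^ n = (fc i N n * r ^ n) * ‖q‖ ^ n := by ring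
        _ ≤ C * ‖q‖ ^ n := by gcongr; exact hC N n
    have htt : ∀ n, Filter.Tendsto (fun N => (fc i N n : ℂ) * q ^ n) Filter.atTop
        (nhds (((⨆ N, fc i N n : ℝ) : ℂ) * q ^ n)) := fun n =>
      ((Complex.continuous_ofReal.tendsto _).comp (ht n)).mul_const _
    have hT := tendsto_tsum_of_dominated_convergence hs htt
      (Filter.Eventually.of_forall fun N n => hbd N n)
    have hsum : Summable (fun n : ℕ => ((⨆ N, fc i N n : ℝ) : ℂ) * q ^ n) :=
      Summable.of_norm_bounded hs fun n =>
        le_of_tendsto' (htt n).norm fun N => hbd N n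
    have hT2 : Filter.Tendsto (fun N => ∑' n : ℕ, (fc i N n : ℂ) * q ^ n) Filter.atTop
        (nhds (ph q (-1) 10 i)⁻¹) := by
      simpa only [(fc_hasSum hq hi _).tsum_eq] using ph_tend hq hi
    change HasSum _ (ph q (-1) 10 i)⁻¹
    rw [tendsto_nhds_unique hT2 hT]
    exact hsum.hasSum

lemma good_pr {i : ℕ} (hi : 0 < i) (hi' : i < 10) :
    Good (fun n => i ∣ n) (fun q => (pr q (-1) i)⁻¹) :=
  ((good_ph hi).mul (good_ph (i := 10 - i) (by omega))).mono (fun _ h => Or.inl h)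
    fun q _ => by simp [pr, mul_comm]

lemma good0 : Good (fun _ => True)
    (fun q => (pr q (-1) 1 ^ 2 * pr q (-1) 2 * pr q (-1) 4 ^ 2)⁻¹) := by
  have h1 := good_pr (i := 1) (by norm_num) (by norm_num)
  have h2 := good_pr (i := 2) (by norm_num) (by norm_num)
  have h4 := good_pr (i := 4) (by norm_num) (by norm_num)
  refine (((((h1.mul h1).mul h2).mul h4).mul h4)).mono ?_ ?_
  · intro n _; simp
  · intro q _
    simp only [mul_inv]; ring

lemma good3 : Good (fun _ => True)
    (fun q => (pr q (-1) 1 * pr q (-1) 2 * pr q (-1) 3 * pr q (-1) 4 ^ 2)⁻¹) := by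
  have h1 := good_pr (i := 1) (by norm_num) (by norm_num)
  have h2 := good_pr (i := 2) (by norm_num) (by norm_num)
  have h3 := good_pr (i := 3) (by norm_num) (by norm_num)
  have h4 := good_pr (i := 4) (by norm_num) (by norm_num)
  refine (((((h1.mul h2).mul h3).mul h4).mul h4)).mono ?_ ?_
  · intro n _; simp
  · intro q _
    simp only [mul_inv]; ring

lemma good23 : Good (fun n => 2 ≤ n) (fun q => (pr q (-1) 2)⁻¹ * (pr q (-1) 3)⁻¹) := by
  have h2 := good_pr (i := 2) (by norm_num) (by norm_num)
  have h3 := good_pr (i := 3) (by norm_num) (by norm_num)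
  refine (h2.mul h3).mono ?_ (fun _ _ => rfl)
  intro n hn
  rcases Nat.even_or_odd n with h | h
  · exact Or.inl h.two_dvd
  · refine Or.inr (Or.inr ⟨n - 3, 3, ?_, ?_, dvd_rfl⟩)
    · obtain ⟨k, hk⟩ := h; omega
    · obtain ⟨k, hk⟩ := h; omega

lemma good2 : Good (fun n => 2 ≤ n) (fun q => (pr q (-1) 2 ^ 3 * pr q (-1) 3 ^ 2)⁻¹) := by
  have h2 := good_pr (i := 2) (by norm_num) (by norm_num)
  refine ((good23.mul good23).mul h2).mono (fun n hn => Or.inl (Or.inl hn)) ?_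
  intro q _
  simp only [mul_inv]; ring

lemma good4 : Good (fun n => 2 ≤ n)
    (fun q => (pr q (-1) 2 ^ 2 * pr q (-1) 3 ^ 2 * pr q (-1) 4)⁻¹) := by
  have h4 := good_pr (i := 4) (by norm_num) (by norm_num)
  refine ((good23.mul good23).mul h4).mono (fun n hn => Or.inl (Or.inl hn)) ?_
  intro q _
  simp only [mul_inv]; ring

lemma main_id' {q : ℂ} (hq1 : ‖q‖ < 1) :
    ph q (-1) 10 2 * ph q (-1) 10 8 * (ph q 1 5 2 * ph q 1 5 3) ^ 2 =
      (pr (q ^ 5) (-1) 1 ^ 2 * pr (q ^ 5) (-1) 2 * pr (q ^ 5) (-1) 4 ^ 2)⁻¹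
      + q ^ 2 * (pr (q ^ 5) (-1) 2 ^ 3 * pr (q ^ 5) (-1) 3 ^ 2)⁻¹
      + q ^ 3 * (2 * (pr (q ^ 5) (-1) 1 * pr (q ^ 5) (-1) 2 * pr (q ^ 5) (-1) 3 *
          pr (q ^ 5) (-1) 4 ^ 2)⁻¹)
      - q ^ 4 * (pr (q ^ 5) (-1) 2 ^ 2 * pr (q ^ 5) (-1) 3 ^ 2 * pr (q ^ 5) (-1) 4)⁻¹ := by
  rcases eq_or_ne q 0 with rfl | hq
  · simp [pr, ph]
  · exact main_id hq hq1

lemma rhs_eq {q : ℂ} (hq : ‖q‖ < 1) :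
    ((∏' k : ℕ, (1 - q ^ (10 * k + 2)) * (1 - q ^ (10 * k + 8))) *
        (∏' k : ℕ, (1 - q ^ (10 * k + 4)) * (1 - q ^ (10 * k + 6))) ^ 2 *
        (∏' k : ℕ, (1 - q ^ (5 * k + 2)) * (1 - q ^ (5 * k + 3))) ^ (-2 : ℤ)) =
    ph q (-1) 10 2 * ph q (-1) 10 8 * (ph q 1 5 2 * ph q 1 5 3) ^ 2 := by
  have key : ∀ (m : ℕ), 0 < m → ∀ i j, (∏' k : ℕ, (1 - q ^ (m * k + i)) * (1 - q ^ (m * k + j))) =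
      ph q (-1) m i * ph q (-1) m j := by
    intro m hm i j
    rw [← ph_pair hq hm i j]
    refine tprod_congr fun k => ?_
    ring
  rw [key 10 (by norm_num), key 10 (by norm_num), key 5 (by norm_num)]
  have d2 := ph_dbl hq (m := 5) (by norm_num) 2
  have d3 := ph_dbl hq (m := 5) (by norm_num) 3
  norm_num only at d2 d3
  have n2 : ph q (-1) 5 2 ≠ 0 := ph_ne hq (by simp) (by norm_num) (by norm_num)
  have n3 : ph q (-1) 5 3 ≠ 0 := ph_ne hq (by simp) (by norm_num) (by norm_num)
  rw [d2, d3, zpow_neg, show (2 : ℤ) = ((2 : ℕ) : ℤ) from rfl, zpow_natCast]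
  field_simp

/-- The part of a dissected series in one residue class modulo five. -/
def cls (a : ℕ → ℝ) (r n : ℕ) : ℝ := if n % 5 = r then a (n / 5) else 0

lemma cls_hasSum {a : ℕ → ℝ} {q x : ℂ} {r : ℕ} (hr : r < 5)
    (h : HasSum (fun n : ℕ => (a n : ℂ) * (q ^ 5) ^ n) x) :
    HasSum (fun n : ℕ => (cls a r n : ℂ) * q ^ n) (q ^ r * x) := by
  have hi : Function.Injective (fun k : ℕ => 5 * k + r) := fun x y h => by
    simp only at h; omega
  refine (hi.hasSum_iff ?_).1 ?_
  · intro n hn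
    have : n % 5 ≠ r := fun h => hn ⟨n / 5, by simp only; omega⟩
    simp [cls, this]
  · refine (h.mul_left (q ^ r)).congr_fun ?_ |> fun h => h
    intro k
    have h1 : (5 * k + r) % 5 = r := by omega
    have h2 : (5 * k + r) / 5 = k := by omega
    simp only [Function.comp, cls, h1, h2, if_true]
    rw [pow_add, pow_mul]; ring

lemma coeff_unique {g h : ℕ → ℂ} {f : ℂ → ℂ}
    (hg : ∀ q : ℂ, ‖q‖ < 1 → HasSum (fun n : ℕ => g n * q ^ n) (f q))
    (hh : ∀ q : ℂ, ‖q‖ < 1 → HasSum (fun n : ℕ => h n * q ^ n) (f q)) : g = h := by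
  have key : ∀ g : ℕ → ℂ, (∀ q : ℂ, ‖q‖ < 1 → HasSum (fun n : ℕ => g n * q ^ n) (f q)) →
      HasFPowerSeriesAt f (FormalMultilinearSeries.ofScalars ℂ g) 0 := by
    intro g hg
    rw [hasFPowerSeriesAt_iff]
    filter_upwards [Metric.ball_mem_nhds (0 : ℂ) one_pos] with z hz
    have := hg z (by simpa using hz)
    simpa [FormalMultilinearSeries.coeff_ofScalars, mul_comm] using this
  have h1 := (key g hg).eq_formalMultilinearSeries (key h hh)
  funext n
  have h2 := congrArg (fun p => FormalMultilinearSeries.coeff p n) h1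
  simpa [FormalMultilinearSeries.coeff_ofScalars] using h2

end Tang

/-- Let `g : ℕ → ℂ` satisfy
`Σ_{n≥0} g(n)qⁿ = (q²,q⁸;q¹⁰)_∞ (q⁴,q⁶;q¹⁰)²_∞ (q²,q³;q⁵)_∞^{−2}` for `|q| < 1`. Then
`g(n)` is real for all `n`, and there exists `N₀` such that for all `n ≥ N₀`:
`g(n) > 0` whenever `n ≡ 0, 2, 3 (mod 5)`, and `g(n) < 0` whenever `n ≡ 4 (mod 5)`. -/
theorem tang_coeff_signs (g : ℕ → ℂ)
    (hg : ∀ q : ℂ, ‖q‖ < 1 → HasSum (fun n : ℕ => g n * q ^ n)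
      ((∏' k : ℕ, (1 - q ^ (10 * k + 2)) * (1 - q ^ (10 * k + 8))) *
        (∏' k : ℕ, (1 - q ^ (10 * k + 4)) * (1 - q ^ (10 * k + 6))) ^ 2 *
        (∏' k : ℕ, (1 - q ^ (5 * k + 2)) * (1 - q ^ (5 * k + 3))) ^ (-2 : ℤ))) :
    (∀ n : ℕ, (g n).im = 0) ∧
    ∃ N₀ : ℕ, ∀ n ≥ N₀,
      ((n % 5 = 0 ∨ n % 5 = 2 ∨ n % 5 = 3) → 0 < (g n).re) ∧
      (n % 5 = 4 → (g n).re < 0) := by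
  obtain ⟨a0, -, -, p0, s0⟩ := Tang.good0
  obtain ⟨a2, -, -, p2, s2⟩ := Tang.good2
  obtain ⟨a3, -, -, p3, s3⟩ := Tang.good3
  obtain ⟨a4, -, -, p4, s4⟩ := Tang.good4
  have hc : ∀ q : ℂ, ‖q‖ < 1 → HasSum (fun n : ℕ => ((Tang.cls a0 0 n + Tang.cls a2 2 n +
      Tang.cls (fun n => 2 * a3 n) 3 n - Tang.cls a4 4 n : ℝ) : ℂ) * q ^ n)
      ((∏' k : ℕ, (1 - q ^ (10 * k + 2)) * (1 - q ^ (10 * k + 8))) *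
        (∏' k : ℕ, (1 - q ^ (10 * k + 4)) * (1 - q ^ (10 * k + 6))) ^ 2 *
        (∏' k : ℕ, (1 - q ^ (5 * k + 2)) * (1 - q ^ (5 * k + 3))) ^ (-2 : ℤ)) := by
    intro q hq
    have hQ : ‖q ^ 5‖ < 1 := by
      rw [norm_pow]; exact pow_lt_one₀ (norm_nonneg _) hq (by norm_num)
    rw [Tang.rhs_eq hq, Tang.main_id' hq]
    have t3 : HasSum (fun n : ℕ => ((2 * a3 n : ℝ) : ℂ) * (q ^ 5) ^ n)
        (2 * (Tang.pr (q ^ 5) (-1) 1 * Tang.pr (q ^ 5) (-1) 2 * Tang.pr (q ^ 5) (-1) 3 *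
          Tang.pr (q ^ 5) (-1) 4 ^ 2)⁻¹) := by
      refine ((s3 _ hQ).mul_left 2).congr_fun ?_ |> fun h => h
      intro n
      push_cast
      ring
    have h := (((Tang.cls_hasSum (r := 0) (by norm_num) (s0 _ hQ)).add
      (Tang.cls_hasSum (r := 2) (by norm_num) (s2 _ hQ))).add
      (Tang.cls_hasSum (r := 3) (a := fun n => 2 * a3 n) (by norm_num) t3)).sub
      (Tang.cls_hasSum (r := 4) (by norm_num) (s4 _ hQ))
    rw [pow_zero, one_mul] at h
    refine h.congr_fun ?_ |> fun h => h
    intro n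
    push_cast
    ring
  have hgc := Tang.coeff_unique hg hc
  subst hgc
  refine ⟨fun n => Complex.ofReal_im _, 15, fun n hn => ?_⟩
  simp only [Complex.ofReal_re]
  have hk : 2 ≤ n / 5 := by omega
  have q0 := p0 (n / 5) trivial
  have q2 := p2 (n / 5) hk
  have q3 := p3 (n / 5) trivial
  have q4 := p4 (n / 5) hk
  constructor
  · rintro (h | h | h) <;> simp [Tang.cls, h] <;> assumption
  · intro h
    simp [Tang.cls, h]; assumption
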